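/- For every n ∈ ℕ, the generalised ant with rule word LLRLRL admits a highway of period 220 + 24n and drift (−2,−2): there exist a finite set S_n ⊆ ℤ², a pattern P_n : S_n → ℤ/6ℤ, a position p_n ∈ S_n and a direction d_n forming a highway of period 220+24n and drift (−2,−2) for LLRLRL. -/

import Mathlib

/-- Cells of the grid `ℤ²`. -/
abbrev Cell : Type := ℤ × ℤ

/-- The four unit directions of `ℤ²` (the state set `Q`). -/
inductive Dir : Type
  | E | N | W | S
deriving DecidableEq

/-- Rotation by 90° counterclockwise. -/
def Dir.left : Dir → Dir
  | .E => .N | .N => .W | .W => .S | .S => .E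

/-- Rotation by 90° clockwise. -/
def Dir.right : Dir → Dir
  | .E => .S | .S => .W | .W => .N | .N => .E

/-- The unit vector of a direction. -/
def Dir.vec : Dir → Cell
  | .E => (1, 0) | .N => (0, 1) | .W => (-1, 0) | .S => (0, -1)

/-- Configurations: a picture `ℤ² → ℤ/nℤ`, a position and a direction. -/
abbrev Config (n : ℕ) : Type := (Cell → ZMod n) × Cell × Dir

/-- One step of the generalised ant whose rule word over the alphabet `ℤ/nℤ` is
described by `isL : ZMod n → Bool` (`isL a = true` iff the ant turns left on symbol
`a`): the symbol under the ant is increased by `1 (mod n)`, the ant turns left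
(counterclockwise) or right (clockwise), and moves one step in its new direction. -/
def antStep (n : ℕ) (isL : ZMod n → Bool) (cfg : Config n) : Config n :=
  let C := cfg.1
  let p := cfg.2.1
  let d' := if isL (C p) then cfg.2.2.left else cfg.2.2.right
  (Function.update C p (C p + 1), p + d'.vec, d')


/-- `IsHighway n isL N drift S P p d` : the pattern `P` (supported on the finite set
`S`, extended by `0` outside `S`), together with the position `p ∈ S` and the
direction `d`, is a highway of period `N` and drift `drift` for the generalised ant
with rule `isL` over the alphabet `ℤ/nℤ`: the ant stays in `S` during the first `N`
steps, after `N` steps it is at `p + drift` in direction `d`, and the pattern is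
reproduced shifted by `drift` (cells of `S` whose shift leaves `S` must carry `0`). -/
def IsHighway (n : ℕ) (isL : ZMod n → Bool) (N : ℕ) (drift : Cell)
    (S : Set Cell) (P : Cell → ZMod n) (p : Cell) (d : Dir) : Prop :=
  S.Finite ∧ p ∈ S ∧ (∀ q : Cell, q ∉ S → P q = 0) ∧
  (∀ t : ℕ, t < N → ((antStep n isL)^[t] (P, p, d)).2.1 ∈ S) ∧
  ((antStep n isL)^[N] (P, p, d)).2.1 = p + drift ∧
  ((antStep n isL)^[N] (P, p, d)).2.2 = d ∧
  (∀ q : Cell, q ∈ S →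
    (q + drift ∈ S → ((antStep n isL)^[N] (P, p, d)).1 (q + drift) = P q) ∧
    (q + drift ∉ S → P q = 0))

/-- The rule word `LLRLRL`: the ant turns left on symbols `0, 1, 3, 5` and right on
symbols `2, 4` (alphabet `ℤ/6ℤ`). -/
def isLLRLRL : ZMod 6 → Bool :=
  fun a => decide (a.val = 0 ∨ a.val = 1 ∨ a.val = 3 ∨ a.val = 5)

/-!
In the highway with parameter `n` a head and a tip are joined by a beam of `n` equal pairs of
columns. In one period the ant starts at the tip, walks along the beam to the head, back to the
tip, again to the head, and finally out along the beam. These four traversals change each pair of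
columns in the same way, in 4, 4, 4 and 12 steps, while the work in head and tip takes
18 + 102 + 2 + 98 = 220 steps whatever `n` is. The symbols that the ant leaves behind are those of
the initial pattern, moved by `(-2, -2)`. As a step only depends on the cell under the ant, every
run on a part of the pattern is also a run on the whole, so finitely many short runs, checked by
evaluation, give the period for all `n`.
-/

/-- A finite piece of a picture, as the list of its columns from left to right; each
column lists its symbols from bottom to top. The bottom cell of the first column is `(0, 0)`, and
the columns may have different heights. -/
abbrev Strip (m : ℕ) : Type := List (List (ZMod m))

namespace Strip

variable {m : ℕ}

/-- The symbol of a strip at a cell, `none` off the strip. -/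
def cell? (V : Strip m) (q : Cell) : Option (ZMod m) :=
  q.1.toNat?.bind fun x => q.2.toNat?.bind fun y => V[x]?.bind (·[y]?)

/-- The strip with the symbol at a cell replaced. -/
def write (V : Strip m) (q : Cell) (a : ZMod m) : Strip m :=
  V.modify q.1.toNat (·.set q.2.toNat a)

/-- The cells of a strip. -/
def cells (V : Strip m) : Set Cell := {q | (V.cell? q).isSome}

/-- The picture showing a strip on a background of zeros. -/
def picture (V : Strip m) (q : Cell) : ZMod m := (V.cell? q).getD 0

/-- The translation that moves the origin to the first cell to the right of a strip. -/
def offset (V : Strip m) : Cell := (V.length, 0)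

theorem offset_append (V W : Strip m) : offset (V ++ W) = offset V + offset W := by
  simp [offset]

theorem offset_nil : offset ([] : Strip m) = 0 := rfl

theorem cell?_natCast (V : Strip m) (x y : ℕ) :
    V.cell? ((x : ℤ), (y : ℤ)) = V[x]?.bind (·[y]?) := rfl

theorem cell?_eq_some_iff {V : Strip m} {q : Cell} {a : ZMod m} :
    V.cell? q = some a ↔ ∃ x y : ℕ, q = ((x : ℤ), (y : ℤ)) ∧
      ∃ col, V[x]? = some col ∧ col[y]? = some a := by
  simp only [cell?, Option.bind_eq_some_iff, Int.mem_toNat?, Prod.ext_iff]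
  grind

theorem cell?_write {V : Strip m} {q : Cell} {a : ZMod m} (hq : V.cell? q = some a) (b : ZMod m) :
    (V.write q b).cell? = Function.update V.cell? q (some b) := by
  obtain ⟨x, y, rfl, col, hcol, ha⟩ := cell?_eq_some_iff.mp hq
  have hy : y < col.length := (List.getElem?_eq_some_iff.mp ha).1
  ext r c
  by_cases hr : r = ((x : ℤ), (y : ℤ))
  · subst hr
    simp [write, cell?_natCast, hcol, hy]
  · rw [Function.update_of_ne hr]
    simp only [cell?_eq_some_iff, write, Int.toNat_natCast, List.getElem?_modify]
    grind

theorem picture_write {V : Strip m} {q : Cell} {a : ZMod m} (hq : V.cell? q = some a)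
    (b : ZMod m) : (V.write q b).picture = Function.update V.picture q b := by
  funext r
  rcases eq_or_ne r q with rfl | hr <;> simp [picture, cell?_write hq, *]

theorem cells_write {V : Strip m} {q : Cell} {a : ZMod m} (hq : V.cell? q = some a)
    (b : ZMod m) : (V.write q b).cells = V.cells := by
  ext r
  rcases eq_or_ne r q with rfl | hr <;> simp [cells, cell?_write hq, *]

theorem picture_of_notMem_cells (V : Strip m) {q : Cell} (hq : q ∉ V.cells) :
    V.picture q = 0 := by
  simp only [picture, Option.not_isSome_iff_eq_none.mp hq, Option.getD_none]

theorem picture_of_neg (V : Strip m) {q : Cell} (hq : q.1 < 0 ∨ q.2 < 0) : V.picture q = 0 := by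
  refine V.picture_of_notMem_cells fun hmem => ?_
  obtain ⟨a, ha⟩ := Option.isSome_iff_exists.mp hmem
  obtain ⟨x, y, rfl, -⟩ := cell?_eq_some_iff.mp ha
  omega

theorem finite_cells (V : Strip m) : V.cells.Finite := by
  refine (Set.finite_Icc (0 : Cell) (V.length, V.flatten.length)).subset fun q hq => ?_
  obtain ⟨a, ha⟩ := Option.isSome_iff_exists.mp hq
  obtain ⟨x, y, rfl, col, hcol, ha⟩ := cell?_eq_some_iff.mp ha
  have hx := (List.getElem?_eq_some_iff.mp hcol).1
  have hy := (List.getElem?_eq_some_iff.mp ha).1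
  have hcol_le := (List.sublist_flatten_of_mem (List.mem_of_getElem? hcol)).length_le
  exact ⟨⟨by simp, by simp⟩, ⟨Int.ofNat_le.mpr hx.le, Int.ofNat_le.mpr (hy.le.trans hcol_le)⟩⟩

theorem cell?_append {A V B : Strip m} {q : Cell} {a : ZMod m} (hq : V.cell? q = some a) :
    (A ++ V ++ B).cell? (offset A + q) = some a := by
  obtain ⟨x, y, rfl, col, hcol, ha⟩ := cell?_eq_some_iff.mp hq
  have hx : x < V.length := (List.getElem?_eq_some_iff.mp hcol).1
  refine cell?_eq_some_iff.mpr ⟨A.length + x, y, ?_, col, ?_, ha⟩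
  · simp only [offset, Prod.mk_add_mk, Nat.cast_add, zero_add]
  · grind

theorem write_append {A V B : Strip m} {q : Cell} {a : ZMod m} (hq : V.cell? q = some a)
    (b : ZMod m) : (A ++ V ++ B).write (offset A + q) b = A ++ V.write q b ++ B := by
  obtain ⟨x, y, rfl, col, hcol, -⟩ := cell?_eq_some_iff.mp hq
  have hx : x < V.length := (List.getElem?_eq_some_iff.mp hcol).1
  apply List.ext_getElem?
  intro i
  simp only [write, offset, Prod.mk_add_mk, zero_add, ← Nat.cast_add, Int.toNat_natCast,
    List.getElem?_modify, List.getElem?_append, List.length_append, List.length_modify]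
  grind

/-- The columns of `V`, moved down by `j`, show the symbols of `F`; the cells that leave the strip
at the bottom carry `0`, and `F` may be higher than the moved `V`. -/
abbrev ReappearsBelow (j : ℕ) (V F : Strip m) : Prop :=
  List.Forall₂ (fun c f => c <+: List.replicate j 0 ++ f) V F

theorem picture_sub_of_reappearsBelow {j : ℕ} {V F : Strip m}
    (hF : ReappearsBelow j V F) (T : Strip m) {q : Cell} {a : ZMod m}
    (hq : V.cell? q = some a) : Strip.picture (F ++ T) (q - (0, (j : ℤ))) = a := by
  obtain ⟨x, y, rfl, col, hcol, hy⟩ := cell?_eq_some_iff.mp hq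
  obtain ⟨hxV, rfl⟩ := List.getElem?_eq_some_iff.mp hcol
  have hxF : x < F.length := hF.length_eq ▸ hxV
  obtain ⟨hyV, rfl⟩ := List.getElem?_eq_some_iff.mp hy
  have hprefix : (List.replicate j 0 ++ F[x])[y]? = some V[x][y] :=
    List.prefix_iff_getElem?.mp (hF.get hxV hxF) y hyV
  rcases lt_or_ge y j with hyj | hyj
  · have hzero : V[x][y] = 0 := by grind
    rw [hzero, picture_of_neg _ (.inr (by simp only [Prod.mk_sub_mk]; omega))]
  · have hcell : cell? (F ++ T) ((x : ℤ), ((y - j : ℕ) : ℤ)) = some V[x][y] := by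
      rw [cell?_natCast]
      grind
    rw [Prod.mk_sub_mk, sub_zero, ← Nat.cast_sub hyj, picture, hcell, Option.getD_some]

end Strip

section Dynamics

variable {m : ℕ} {isL : ZMod m → Bool} {j k : ℕ} {V V' : Strip m} {p p' : Cell} {d d' : Dir}

/-- One step of the ant on a strip, `none` if the ant is off the strip. -/
def stripStep (isL : ZMod m → Bool) : Strip m × Cell × Dir → Option (Strip m × Cell × Dir)
  | (V, p, d) => (V.cell? p).map fun a =>
      let d' := if isL a then d.left else d.right
      (V.write p (a + 1), p + d'.vec, d')

/-- The ant after `k` steps on a strip, `none` if one of these steps starts off the strip. -/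
def stripRun (isL : ZMod m → Bool) : ℕ → Strip m × Cell × Dir → Option (Strip m × Cell × Dir)
  | 0, s => some s
  | k + 1, s => (stripStep isL s).bind (stripRun isL k)

/-- The ant takes `k` steps, each from a cell of the strip, to get from the state `s` to `t`;
the position in `t` may be off the strip. -/
def Reaches (isL : ZMod m → Bool) (k : ℕ) (s t : Strip m × Cell × Dir) : Prop :=
  stripRun isL k s = some t

instance (k : ℕ) (s t : Strip m × Cell × Dir) : Decidable (Reaches isL k s t) :=
  inferInstanceAs (Decidable (_ = _))

namespace Reaches

theorem refl (s : Strip m × Cell × Dir) : Reaches isL 0 s s := rfl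

theorem succ_iff {t : Strip m × Cell × Dir} :
    Reaches isL (k + 1) (V, p, d) t ↔ ∃ a, V.cell? p = some a ∧
      Reaches isL k (V.write p (a + 1), p + (if isL a then d.left else d.right).vec,
        if isL a then d.left else d.right) t := by
  simp only [Reaches, stripRun, stripStep, Option.bind_map, Option.bind_eq_some_iff,
    Function.comp_apply]

theorem trans {s t r : Strip m × Cell × Dir} (hst : Reaches isL j s t) (htr : Reaches isL k t r) :
    Reaches isL (j + k) s r := by
  induction j generalizing s with
  | zero =>
    obtain rfl : s = t := Option.some.inj hst
    rwa [Nat.zero_add]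
  | succ j ih =>
    obtain ⟨V, p, d⟩ := s
    obtain ⟨a, ha, hst⟩ := succ_iff.mp hst
    rw [Nat.succ_add]
    exact succ_iff.mpr ⟨a, ha, ih hst⟩

theorem append (h : Reaches isL k (V, p, d) (V', p', d')) (A B : Strip m) :
    Reaches isL k (A ++ V ++ B, A.offset + p, d) (A ++ V' ++ B, A.offset + p', d') := by
  induction k generalizing V p d with
  | zero =>
    cases Option.some.inj h
    exact refl _
  | succ k ih =>
    obtain ⟨a, ha, h⟩ := succ_iff.mp h
    refine succ_iff.mpr ⟨a, Strip.cell?_append ha, ?_⟩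
    rw [Strip.write_append ha, add_assoc]
    exact ih h

theorem append_left (h : Reaches isL k (V, p, d) (V', p', d')) (A : Strip m) :
    Reaches isL k (A ++ V, A.offset + p, d) (A ++ V', A.offset + p', d') := by
  simpa only [List.append_nil] using h.append A []

theorem append_right (h : Reaches isL k (V, p, d) (V', p', d')) (B : Strip m) :
    Reaches isL k (V ++ B, p, d) (V' ++ B, p', d') := by
  simpa only [List.nil_append, Strip.offset_nil, zero_add] using h.append [] B

theorem sweep_right {carried block block' : Strip m}
    (h : Reaches isL k (carried ++ block, p, d) (block' ++ carried, block'.offset + p, d)) (n : ℕ) :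
    Reaches isL (k * n) (carried ++ (List.replicate n block).flatten, p, d)
      ((List.replicate n block').flatten ++ carried,
        Strip.offset (List.replicate n block').flatten + p, d) := by
  induction n with
  | zero =>
    simpa only [Nat.mul_zero, List.replicate_zero, List.flatten_nil, List.append_nil,
      List.nil_append, Strip.offset_nil, zero_add] using refl (carried, p, d)
  | succ n ih =>
    have hfirst := h.append_right (List.replicate n block).flatten
    have hrest := ih.append_left block'
    simp only [List.append_assoc] at hfirst
    simpa only [List.replicate_succ, List.flatten_cons, Strip.offset_append, List.append_assoc,
      add_assoc, Nat.mul_succ, Nat.add_comm] using hfirst.trans hrest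

theorem sweep_left {carried block block' : Strip m}
    (h : Reaches isL k (block ++ carried, block.offset + p, d) (carried ++ block', p, d)) (n : ℕ) :
    Reaches isL (k * n)
      ((List.replicate n block).flatten ++ carried,
        Strip.offset (List.replicate n block).flatten + p, d)
      (carried ++ (List.replicate n block').flatten, p, d) := by
  induction n with
  | zero =>
    simpa only [Nat.mul_zero, List.replicate_zero, List.flatten_nil, List.append_nil,
      List.nil_append, Strip.offset_nil, zero_add] using refl (carried, p, d)
  | succ n ih =>
    have hlast := ih.append_left block
    have hfirst := h.append_right (List.replicate n block').flatten
    simp only [List.append_assoc] at hfirst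
    simpa only [List.replicate_succ, List.flatten_cons, Strip.offset_append, List.append_assoc,
      add_assoc, Nat.mul_succ] using hlast.trans hfirst

theorem antStep_iterate (h : Reaches isL k (V, p, d) (V', p', d')) :
    (antStep m isL)^[k] (V.picture, p, d) = (V'.picture, p', d') ∧
      V'.cells = V.cells ∧ ∀ t < k, ((antStep m isL)^[t] (V.picture, p, d)).2.1 ∈ V.cells := by
  induction k generalizing V p d with
  | zero =>
    cases Option.some.inj h
    exact ⟨rfl, rfl, fun t ht => absurd ht t.not_lt_zero⟩
  | succ k ih =>
    obtain ⟨a, ha, h⟩ := succ_iff.mp h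
    obtain ⟨hend, hcells, hstay⟩ := ih h
    have hfirst : antStep m isL (V.picture, p, d) = ((V.write p (a + 1)).picture,
        p + (if isL a then d.left else d.right).vec, if isL a then d.left else d.right) := by
      simp [antStep, Strip.picture_write ha, Strip.picture, ha]
    rw [Strip.cells_write ha] at hcells hstay
    refine ⟨by rw [Function.iterate_succ_apply, hfirst, hend], hcells, fun t ht => ?_⟩
    rcases t with _ | t
    · exact Option.isSome_iff_exists.mpr ⟨a, ha⟩
    · rw [Function.iterate_succ_apply, hfirst]
      exact hstay t (by omega)

theorem isHighway {drift : Cell} (hk : 0 < k) (h : Reaches isL k (V, p, d) (V', p + drift, d))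
    (hdrift : ∀ q a, V.cell? q = some a → V'.picture (q + drift) = a) :
    IsHighway m isL k drift V.cells V.picture p d := by
  obtain ⟨hend, hcells, hstay⟩ := h.antStep_iterate
  have hshift : ∀ q ∈ V.cells, V'.picture (q + drift) = V.picture q := by
    intro q hq
    obtain ⟨a, ha⟩ := Option.isSome_iff_exists.mp hq
    rw [hdrift q a ha, Strip.picture, ha, Option.getD_some]
  refine ⟨V.finite_cells, hstay 0 hk, fun q hq => V.picture_of_notMem_cells hq, hstay, ?_, ?_, ?_⟩
  · rw [hend]
  · rw [hend]
  · rw [hend]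
    refine fun q hq => ⟨fun _ => hshift q hq, fun hq' => ?_⟩
    rw [← hshift q hq]
    exact V'.picture_of_notMem_cells (hcells ▸ hq')

/-- The cells of `S` whose translate leaves `S` are the margin of `i` zero columns and the zeros at
the bottom of the columns of `V`; `T` is the debris that the highway leaves behind. -/
theorem isHighway_of_reappearsBelow {i j h : ℕ} {F T : Strip m} (hk : 0 < k)
    (hrun : Reaches isL k (List.replicate i (List.replicate h 0) ++ V, p, d)
      (F ++ T, p + (-(i : ℤ), -(j : ℤ)), d))
    (hF : Strip.ReappearsBelow j V F) :
    IsHighway m isL k (-(i : ℤ), -(j : ℤ))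
      (Strip.cells (List.replicate i (List.replicate h 0) ++ V))
      (Strip.picture (List.replicate i (List.replicate h 0) ++ V)) p d := by
  refine hrun.isHighway hk fun q a ha => ?_
  obtain ⟨x, y, rfl, col, hcol, hy⟩ := Strip.cell?_eq_some_iff.mp ha
  rcases lt_or_ge x i with hx | hx
  · have hzero : a = 0 := by grind
    rw [hzero, Strip.picture_of_neg _ (.inl (by simp only [Prod.mk_add_mk]; omega))]
  · have hcell : V.cell? (((x - i : ℕ) : ℤ), (y : ℤ)) = some a := by
      rw [Strip.cell?_natCast]
      grind
    convert Strip.picture_sub_of_reappearsBelow hF T hcell using 2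
    simp only [Prod.mk_add_mk, Prod.mk_sub_mk, Nat.cast_sub hx, sub_zero, ← sub_eq_add_neg]

end Reaches

end Dynamics

namespace LLRLRL

/-- The head of the highway at the start, after its first and after its second visit by the ant;
its ninth column after the second visit is `joint`, which the last traversal of the beam
changes. -/
def head : Fin 3 → Strip 6
  | 0 =>
    [[0, 0, 0, 0, 0, 0, 0, 0, 0, 0],
     [0, 0, 0, 0, 0, 0, 0, 0, 0, 0],
     [0, 0, 0, 0, 0, 0, 2, 2, 2, 2],
     [0, 0, 0, 0, 0, 0, 2, 0, 0, 2],
     [0, 0, 0, 0, 2, 2, 1, 5, 1, 4],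
     [0, 0, 0, 0, 2, 5, 3, 3, 2, 3],
     [0, 0, 2, 2, 1, 3, 2, 3, 0, 2],
     [0, 0, 2, 5, 3, 2, 3, 1, 1, 1],
     [0, 0, 2, 4, 5, 4, 0, 5, 2, 0]]
  | 1 =>
    [[0, 0, 0, 0, 0, 0, 0, 0, 0, 0],
     [0, 0, 0, 0, 0, 2, 2, 0, 0, 0],
     [0, 0, 0, 0, 0, 2, 5, 4, 3, 2],
     [0, 0, 0, 2, 2, 2, 1, 3, 1, 3],
     [0, 0, 0, 2, 0, 0, 5, 2, 3, 5],
     [0, 2, 2, 1, 5, 2, 5, 1, 5, 3],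
     [0, 2, 5, 3, 3, 1, 0, 0, 1, 2],
     [0, 1, 3, 5, 4, 5, 0, 2, 1, 1],
     [0, 1, 3, 4, 5, 5, 1, 5, 2, 0]]
  | 2 =>
    [[0, 0, 0, 0, 2, 2, 2, 2, 0, 0],
     [0, 0, 0, 0, 2, 0, 0, 2, 0, 0],
     [0, 0, 2, 2, 1, 5, 1, 4, 3, 2],
     [0, 0, 2, 5, 3, 3, 2, 3, 1, 3],
     [2, 2, 1, 3, 2, 3, 0, 2, 3, 5],
     [2, 5, 3, 2, 3, 1, 1, 1, 5, 3],
     [2, 4, 5, 4, 0, 5, 2, 0, 1, 2],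
     [2, 4, 4, 5, 0, 1, 0, 2, 1, 1]]

/-- A column of the beam of the highway at the start and after each of its four traversals. -/
def beamColumn : Fin 5 → List (ZMod 6)
  | 0 => [0, 0, 2, 4, 4, 5]
  | 1 => [0, 0, 2, 4, 5, 0]
  | 2 => [0, 1, 3, 4, 5, 0]
  | 3 => [0, 1, 3, 5, 0, 0]
  | 4 => [2, 4, 4, 5, 0, 0]

/-- The tip of the highway at the start, after its first and after its second visit by the ant. -/
def tip : Fin 3 → Strip 6
  | 0 => [[0, 0, 2, 4, 4, 5], [0, 0, 1, 3, 4, 5], [0, 0, 0, 0, 4, 0]]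
  | 1 => [[0, 0, 3, 5, 5, 0], [0, 0, 3, 1, 0, 5], [0, 0, 2, 3, 5, 0]]
  | 2 => [[0, 0, 4, 0, 5, 0], [0, 0, 3, 1, 0, 5], [0, 0, 2, 3, 5, 0]]

/-- The beam of the highway, of `2 * n` equal columns, in one of its five states. -/
def beam (n : ℕ) (i : Fin 5) : Strip 6 := List.replicate (n * 2) (beamColumn i)

/-- The ninth column of the head after the second visit of the ant; the last traversal of the beam
starts here. -/
def joint : List (ZMod 6) := [1, 3, 4, 5, 0, 5, 1, 5, 2, 0]

/-- The column that the ant carries to the right in the last traversal of the beam. -/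
def carrier : List (ZMod 6) := [1, 3, 4, 5, 0, 0]

/-- The initial pattern of the highway. -/
def highway (n : ℕ) : Strip 6 := head 0 ++ beam n 0 ++ tip 0

theorem flatten_replicate_pair (n : ℕ) (i : Fin 5) :
    (List.replicate n [beamColumn i, beamColumn i]).flatten = beam n i :=
  List.flatten_replicate_replicate (m := 2)

theorem offset_beam (n : ℕ) (i : Fin 5) : Strip.offset (beam n i) = (2 * (n : ℤ), 0) := by
  simp only [Strip.offset, beam, List.length_replicate, Nat.cast_mul, Nat.cast_ofNat, mul_comm]

theorem beam_succ (n : ℕ) (i : Fin 5) :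
    beam (n + 1) i = [beamColumn i, beamColumn i] ++ beam n i := by
  rw [beam, Nat.succ_mul, Nat.add_comm, List.replicate_add]
  rfl

theorem beam_append_singleton (n : ℕ) (i : Fin 5) :
    beam n i ++ [beamColumn i] = beamColumn i :: beam n i := by
  rw [beam, ← List.replicate_succ', List.replicate_succ]

theorem reaches_tip_fst : Reaches isLLRLRL 18 (tip 0, (2, 2), .E) (tip 1, (-1, 5), .W) := by
  decide +kernel

theorem reaches_beam_fst (n : ℕ) :
    Reaches isLLRLRL (4 * n) (beam n 0, Strip.offset (beam n 0) + (-1, 5), .W)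
      (beam n 1, (-1, 5), .W) := by
  have hpair : Reaches isLLRLRL 4 ([beamColumn 0, beamColumn 0] ++ [], (2, 0) + (-1, 5), .W)
      ([] ++ [beamColumn 1, beamColumn 1], (-1, 5), .W) := by decide +kernel
  simpa only [flatten_replicate_pair, List.append_nil, List.nil_append] using hpair.sweep_left n

theorem reaches_head_fst :
    Reaches isLLRLRL 102 (head 0, (8, 5), .W) (head 1, (9, 2), .E) := by
  decide +kernel

theorem reaches_beam_snd (n : ℕ) :
    Reaches isLLRLRL (4 * n) (beam n 1, (0, 2), .E)
      (beam n 2, Strip.offset (beam n 2) + (0, 2), .E) := by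
  have hpair : Reaches isLLRLRL 4 ([] ++ [beamColumn 1, beamColumn 1], (0, 2), .E)
      ([beamColumn 2, beamColumn 2] ++ [], (2, 0) + (0, 2), .E) := by decide +kernel
  simpa only [flatten_replicate_pair, List.append_nil, List.nil_append] using hpair.sweep_right n

theorem reaches_tip_snd : Reaches isLLRLRL 2 (tip 1, (0, 2), .E) (tip 2, (-1, 3), .W) := by
  decide +kernel

theorem reaches_beam_third (n : ℕ) :
    Reaches isLLRLRL (4 * n) (beam n 2, Strip.offset (beam n 2) + (-1, 3), .W)
      (beam n 3, (-1, 3), .W) := by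
  have hpair : Reaches isLLRLRL 4 ([beamColumn 2, beamColumn 2] ++ [], (2, 0) + (-1, 3), .W)
      ([] ++ [beamColumn 3, beamColumn 3], (-1, 3), .W) := by decide +kernel
  simpa only [flatten_replicate_pair, List.append_nil, List.nil_append] using hpair.sweep_left n

theorem reaches_head_snd :
    Reaches isLLRLRL 98 (head 1, (8, 3), .W) (head 2 ++ [joint], (9, 0), .E) := by
  decide +kernel

theorem reaches_beam_carrier (n : ℕ) :
    Reaches isLLRLRL (12 * n) (carrier :: beam n 3, (1, 0), .E)
      (beam n 4 ++ [carrier], Strip.offset (beam n 4) + (1, 0), .E) := by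
  have hpair : Reaches isLLRLRL 12 ([carrier] ++ [beamColumn 3, beamColumn 3], (1, 0), .E)
      ([beamColumn 4, beamColumn 4] ++ [carrier], (2, 0) + (1, 0), .E) := by decide +kernel
  simpa only [flatten_replicate_pair, List.singleton_append] using hpair.sweep_right n

theorem reappearsBelow_beam (n : ℕ) : Strip.ReappearsBelow 2 (beam n 0) (beam n 4) := by
  induction n with
  | zero => exact .nil
  | succ n ih =>
    rw [beam_succ, beam_succ]
    exact List.rel_append (by decide) ih

theorem exists_reaches_joint_beam (n : ℕ) : ∃ F,
    Reaches isLLRLRL (12 * n) (joint :: beam n 3, (1, 0), .E)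
      (F, Strip.offset (beam n 4) + (1, 0), .E) ∧
    Strip.ReappearsBelow 2 (beam n 0 ++ ((tip 0).drop 1).take 1) F := by
  rcases n with _ | n
  · exact ⟨[joint], by decide +kernel, by decide +kernel⟩
  · -- The traversal leaves the top of `joint` unchanged, so the first pair needs its own run.
    let A : Strip 6 := [[2, 4, 4, 5, 0, 5, 1, 5, 2, 0], beamColumn 4]
    have hpair : Reaches isLLRLRL 12 ([joint, beamColumn 3, beamColumn 3], (1, 0), .E)
        (A ++ [carrier], (2, 0) + (1, 0), .E) := by decide +kernel
    refine ⟨A ++ (beam n 4 ++ [carrier]), ?_, ?_⟩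
    · rw [beam_succ, beam_succ, Strip.offset_append, add_assoc, Nat.mul_succ, Nat.add_comm]
      exact (hpair.append_right (beam n 3)).trans ((reaches_beam_carrier n).append_left A)
    · rw [beam_succ, List.append_assoc]
      exact List.rel_append (by decide) (List.rel_append (reappearsBelow_beam n) (by decide))

theorem reaches_period {n : ℕ} {F : Strip 6}
    (hF : Reaches isLLRLRL (12 * n) (joint :: beam n 3, (1, 0), .E)
      (F, Strip.offset (beam n 4) + (1, 0), .E)) :
    Reaches isLLRLRL (220 + 24 * n) (highway n, (11 + 2 * (n : ℤ), 2), .E)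
      (head 2 ++ F ++ tip 2, (9 + 2 * (n : ℤ), 0), .E) := by
  have tip₁ := reaches_tip_fst.append_left (head 0 ++ beam n 0)
  have beam₁ := (reaches_beam_fst n).append (head 0) (tip 1)
  have head₁ := reaches_head_fst.append_right (beam n 1 ++ tip 1)
  have beam₂ := (reaches_beam_snd n).append (head 1) (tip 1)
  have tip₂ := reaches_tip_snd.append_left (head 1 ++ beam n 2)
  have beam₃ := (reaches_beam_third n).append (head 1) (tip 2)
  have head₂ := reaches_head_snd.append_right (beam n 3 ++ tip 2)
  have beam₄ := hF.append (head 2) (tip 2)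
  have hhead₀ : (head 0).offset = (9, 0) := rfl
  have hhead₁ : (head 1).offset = (9, 0) := rfl
  have hhead₂ : (head 2).offset = (8, 0) := rfl
  simp only [List.append_assoc, List.singleton_append, Strip.offset_append, offset_beam, add_assoc,
    hhead₀, hhead₁, hhead₂] at tip₁ beam₁ head₁ beam₂ tip₂ beam₃ head₂ beam₄
  have hrun := tip₁.trans <| beam₁.trans <| head₁.trans <| beam₂.trans <| tip₂.trans <|
    beam₃.trans <| head₂.trans beam₄
  have hsteps : 220 + 24 * n =
      18 + (4 * n + (102 + (4 * n + (2 + (4 * n + (98 + 12 * n)))))) := by ring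
  have hstart : ((11 + 2 * (n : ℤ), 2) : Cell) = (9, 0) + ((2 * (n : ℤ), 0) + (2, 2)) := by
    ext <;> simp only [Prod.mk_add_mk] <;> ring
  have hend : ((9 + 2 * (n : ℤ), 0) : Cell) = (8, 0) + ((2 * (n : ℤ), 0) + (1, 0)) := by
    ext <;> simp only [Prod.mk_add_mk] <;> ring
  rw [hsteps, hstart, hend]
  simpa only [highway, List.append_assoc] using hrun

theorem reappearsBelow_highway {n : ℕ} {F : Strip 6}
    (hF : Strip.ReappearsBelow 2 (beam n 0 ++ ((tip 0).drop 1).take 1) F) :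
    Strip.ReappearsBelow 2 ((highway n).drop 2) (head 2 ++ F ++ (tip 2).take 1) := by
  have hhead : Strip.ReappearsBelow 2 ((head 0).drop 2 ++ [beamColumn 0]) (head 2) := by decide
  have htip : Strip.ReappearsBelow 2 ((tip 0).drop 2) ((tip 2).take 1) := by decide
  have hsplit : (highway n).drop 2 = (head 0).drop 2 ++ [beamColumn 0] ++
      (beam n 0 ++ ((tip 0).drop 1).take 1) ++ (tip 0).drop 2 := by
    calc (highway n).drop 2
        = (head 0).drop 2 ++ (beam n 0 ++ [beamColumn 0] ++ (tip 0).drop 1) := by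
          rw [highway, List.append_assoc, List.append_assoc]
          rfl
      _ = _ := by
          rw [beam_append_singleton, List.append_assoc, List.append_assoc, List.append_assoc]
          rfl
  rw [hsplit]
  exact List.rel_append (List.rel_append hhead hF) htip

theorem isHighway_highway (n : ℕ) :
    IsHighway 6 isLLRLRL (220 + 24 * n) (-2, -2) (highway n).cells (highway n).picture
      (11 + 2 * (n : ℤ), 2) .E := by
  obtain ⟨F, hbeam, hF⟩ := exists_reaches_joint_beam n
  have hrun := reaches_period hbeam
  have hdrift : ((9 + 2 * (n : ℤ), 0) : Cell) = (11 + 2 * (n : ℤ), 2) + (-2, -2) := by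
    ext <;> simp only [Prod.mk_add_mk] <;> ring
  rw [← List.take_append_drop 1 (tip 2), ← List.append_assoc, hdrift] at hrun
  exact Reaches.isHighway_of_reappearsBelow (i := 2) (j := 2) (h := 10) (by omega) hrun
    (reappearsBelow_highway hF)

end LLRLRL

/-- For every `n ∈ ℕ`, the generalised ant with rule word `LLRLRL`
admits a highway of period `220 + 24n` and drift `(−2,−2)`. -/
theorem llrlrl_highways (n : ℕ) :
    ∃ (S : Set Cell) (P : Cell → ZMod 6) (p : Cell) (d : Dir),
      IsHighway 6 isLLRLRL (220 + 24 * n) ((-2, -2) : Cell) S P p d :=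
  ⟨_, _, _, _, LLRLRL.isHighway_highway n⟩
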